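/- arXiv:2207.05445 — 2 statements merged into one kernel-verified Lean document; each statement's English description precedes it below -/
import Mathlib

section
/- Gâteaux derivative of the energy functional: Let p ∈ (1,∞) and V ⊆ X. For every φ ∈ D and every ψ ∈ C_c(V), one has φ + tψ ∈ D for all t ∈ ℝ, and the map t ↦ h(φ + tψ) is differentiable at t = 0 with derivative equal to p·⟨Hφ, ψ⟩_V = p·Σ_{x∈V} Hφ(x)ψ(x)m(x). -/
open scoped BigOperators

/-- `⟨a⟩_p := |a|^{p-1} · sgn(a)`. -/
noncomputable def pPow (p a : ℝ) : ℝ := |a| ^ (p - 1) * Real.sign a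

/-- `C(V)`: real-valued functions on `X` vanishing outside `V`. -/
def MemC {X : Type*} (V : Set X) (f : X → ℝ) : Prop := ∀ x ∉ V, f x = 0

/-- `C_c(V)`: finitely supported functions with support contained in `V`. -/
def MemCc {X : Type*} (V : Set X) (f : X → ℝ) : Prop :=
  (Function.support f).Finite ∧ ∀ x ∉ V, f x = 0

/-- The formal space `F(V)`. -/
def MemF {X : Type*} (b : X → X → ℝ) (p : ℝ) (V : Set X) (f : X → ℝ) : Prop :=
  ∀ x ∈ V, Summable fun y => b x y * |f y| ^ (p - 1)

/-- The domain `D` of the energy functional. -/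
def MemD {X : Type*} (b : X → X → ℝ) (c : X → ℝ) (p : ℝ) (f : X → ℝ) : Prop :=
  (Summable fun z : X × X => b z.1 z.2 * |f z.1 - f z.2| ^ p) ∧
  (Summable fun x => |c x| * |f x| ^ p)

/-- The `p`-energy functional `h`. -/
noncomputable def energy {X : Type*} (b : X → X → ℝ) (c : X → ℝ) (p : ℝ) (f : X → ℝ) : ℝ :=
  (1 / 2) * ∑' z : X × X, b z.1 z.2 * |f z.1 - f z.2| ^ p + ∑' x, c x * |f x| ^ p

/-- The `p`-Schrödinger operator `H`. -/
noncomputable def HOp {X : Type*} (m : X → ℝ) (b : X → X → ℝ) (c : X → ℝ) (p : ℝ)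
    (f : X → ℝ) (x : X) : ℝ :=
  (1 / m x) * ∑' y, b x y * pPow p (f x - f y) + (c x / m x) * pPow p (f x)

/-- The `p`-Laplacian `L` (i.e. `H` with potential `0`). -/
noncomputable def LOp {X : Type*} (m : X → ℝ) (b : X → X → ℝ) (p : ℝ)
    (f : X → ℝ) (x : X) : ℝ :=
  (1 / m x) * ∑' y, b x y * pPow p (f x - f y)

/-- `(X, m, b)` is a weighted graph. -/
def IsGraph {X : Type*} (m : X → ℝ) (b : X → X → ℝ) : Prop :=
  (∀ x, 0 < m x) ∧ (∀ x y, 0 ≤ b x y) ∧ (∀ x y, b x y = b y x) ∧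
  (∀ x, b x x = 0) ∧ (∀ x, Summable fun y => b x y)

/-- A set `V` is connected w.r.t. the graph: any two of its vertices are joined by a
path of neighbours inside `V`. -/
def ConnectedIn {X : Type*} (b : X → X → ℝ) (V : Set X) : Prop :=
  ∀ x ∈ V, ∀ y ∈ V, Relation.ReflTransGen (fun u v => u ∈ V ∧ v ∈ V ∧ 0 < b u v) x y

/-- The (outer) boundary `∂V`. -/
def bdry {X : Type*} (b : X → X → ℝ) (V : Set X) : Set X :=
  {y | y ∉ V ∧ ∃ z ∈ V, 0 < b y z}

/-- `u` is harmonic on `V` (w.r.t. `H`). -/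
def HarmonicOn {X : Type*} (m : X → ℝ) (b : X → X → ℝ) (c : X → ℝ) (p : ℝ)
    (V : Set X) (u : X → ℝ) : Prop := ∀ x ∈ V, HOp m b c p u x = 0

/-- `u` is superharmonic on `V` (w.r.t. `H`). -/
def SuperharmonicOn {X : Type*} (m : X → ℝ) (b : X → X → ℝ) (c : X → ℝ) (p : ℝ)
    (V : Set X) (u : X → ℝ) : Prop := ∀ x ∈ V, 0 ≤ HOp m b c p u x

/-- `h` is non-negative on `C_c(V)`. -/
def EnergyNonneg {X : Type*} (b : X → X → ℝ) (c : X → ℝ) (p : ℝ) (V : Set X) : Prop :=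
  ∀ φ : X → ℝ, MemCc V φ → 0 ≤ energy b c p φ

/-- `h` is subcritical in `V`: a Hardy inequality holds. -/
def Subcritical {X : Type*} (b : X → X → ℝ) (c : X → ℝ) (p : ℝ) (V : Set X) : Prop :=
  ∃ w : X → ℝ, (∀ x, 0 ≤ w x) ∧ w ≠ 0 ∧
    ∀ φ : X → ℝ, MemCc V φ → (∑' x, |φ x| ^ p * w x) ≤ energy b c p φ

/-- `h` is critical in `V`. -/
def Critical {X : Type*} (b : X → X → ℝ) (c : X → ℝ) (p : ℝ) (V : Set X) : Prop :=
  EnergyNonneg b c p V ∧ ¬ Subcritical b c p V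

/-- The bottom of the spectrum / variational constant `λ₀(V)`. -/
noncomputable def lam0 {X : Type*} (m : X → ℝ) (b : X → X → ℝ) (c : X → ℝ) (p : ℝ)
    (V : Set X) : ℝ :=
  sInf {r : ℝ | ∃ φ : X → ℝ, MemCc V φ ∧ φ ≠ 0 ∧
    r = energy b c p φ / ∑' x, |φ x| ^ p * m x}

/-- The variational `p`-capacity `cap_h(x, V)`. -/
noncomputable def capH {X : Type*} (b : X → X → ℝ) (c : X → ℝ) (p : ℝ)
    (V : Set X) (x : X) : ℝ :=
  sInf {r : ℝ | ∃ φ : X → ℝ, MemCc V φ ∧ φ x = 1 ∧ r = energy b c p φ}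

/-- The weighted bracket `⟨f, g⟩_V = Σ_{x ∈ V} f(x) g(x) m(x)`. -/
noncomputable def bracket {X : Type*} (m : X → ℝ) (V : Set X) (f g : X → ℝ) : ℝ :=
  ∑' x, Set.indicator V (fun x => f x * g x * m x) x

/-- `u ∈ M(V ∖ K)`: positive harmonic function of minimal growth in a neighbourhood of
infinity in `V` (harmonic on `V∖K`, positive on `V ∪ ∂V`). -/
def MemM {X : Type*} (m : X → ℝ) (b : X → X → ℝ) (c : X → ℝ) (p : ℝ)
    (V K : Set X) (u : X → ℝ) : Prop :=
  HarmonicOn m b c p (V \ K) u ∧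
  (∀ x ∈ V ∪ bdry b V, 0 ≤ u x) ∧ (∃ x ∈ V ∪ bdry b V, u x ≠ 0) ∧
  ∀ K' : Set X, K ⊆ K' → K' ⊆ V → K'.Finite → ConnectedIn b K' →
    ∀ v : X → ℝ, MemF b p (V \ K') v →
      (∀ x ∈ V \ K', 0 ≤ v x) → (∃ x ∈ V \ K', v x ≠ 0) →
      SuperharmonicOn m b c p (V \ K') v →
      (∀ x ∈ K', u x ≤ v x) → ∀ x ∈ V \ K', u x ≤ v x

/-- `u` is a normalised Green's function in `V` at `o`. -/
def IsNormalisedGreen {X : Type*} (m : X → ℝ) (b : X → X → ℝ) (c : X → ℝ) (p : ℝ)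
    (V : Set X) (o : X) (u : X → ℝ) : Prop :=
  MemM m b c p V {o} u ∧ MemF b p V u ∧ HOp m b c p u o ≠ 0 ∧
  ∀ x ∈ V, HOp m b c p u x = Set.indicator {o} (fun _ => (1:ℝ)) x



lemma aux_pPow (p a : ℝ) (hp : 1 < p) : |a| ^ (p - 2) * a = pPow p a := by
  unfold pPow
  rcases eq_or_ne a 0 with rfl | ha
  · simp
  · have h : |a| ^ (p - 1) = |a| ^ (p - 2) * |a| := by
      rw [← Real.rpow_add_one (abs_ne_zero.mpr ha)]; congr 1; ring
    rw [h, mul_assoc]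
    congr 1
    rcases lt_or_gt_of_ne ha with h | h
    · rw [Real.sign_of_neg h, abs_of_neg h]; ring
    · rw [Real.sign_of_pos h, abs_of_pos h]; ring

lemma aux_add_rpow (p a b : ℝ) (hp : 1 < p) (ha : 0 ≤ a) (hb : 0 ≤ b) :
    (a + b) ^ p ≤ 2 ^ p * (a ^ p + b ^ p) := by
  have h1 : a + b ≤ 2 * max a b := by
    have := le_max_left a b
    have := le_max_right a b
    linarith
  have hm : 0 ≤ max a b := le_max_of_le_left ha
  calc (a + b) ^ p ≤ (2 * max a b) ^ p := Real.rpow_le_rpow (by positivity) h1 (by linarith)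
    _ = 2 ^ p * (max a b) ^ p := Real.mul_rpow (by norm_num) hm
    _ ≤ _ := by
      gcongr
      have := Real.rpow_nonneg ha p
      have := Real.rpow_nonneg hb p
      rcases max_choice a b with h | h <;> rw [h] <;> linarith

lemma aux_abs_pPow_mul (p a g : ℝ) (hp : 1 < p) : |pPow p a * g| ≤ (|a| + |g|) ^ p := by
  have h0 : |pPow p a| ≤ (|a| + |g|) ^ (p - 1) := by
    unfold pPow
    rw [abs_mul, abs_of_nonneg (Real.rpow_nonneg (abs_nonneg a) _)]
    have hs : |Real.sign a| ≤ 1 := by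
      rcases Real.sign_apply_eq a with h | h | h <;> rw [h] <;> norm_num
    calc |a| ^ (p - 1) * |Real.sign a| ≤ |a| ^ (p - 1) * 1 := by gcongr
      _ = |a| ^ (p - 1) := mul_one _
      _ ≤ _ := Real.rpow_le_rpow (abs_nonneg a) (by linarith [abs_nonneg g]) (by linarith)
  have hn : 0 ≤ |a| + |g| := by positivity
  rw [abs_mul]
  calc |pPow p a| * |g| ≤ (|a| + |g|) ^ (p - 1) * (|a| + |g|) := by
        gcongr
        linarith [abs_nonneg a]
    _ = (|a| + |g|) ^ p := by
        rcases hn.eq_or_lt with h | h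
        · rw [← h, Real.zero_rpow (by linarith : p ≠ 0)]; simp
        · rw [← Real.rpow_add_one h.ne']; congr 1; ring

lemma aux_summable {ι : Type*} (w f g : ι → ℝ) (p : ℝ) (hp : 1 < p)
    (hf : Summable fun i => |w i| * |f i| ^ p) (hg : Summable fun i => |w i| * |g i| ^ p) :
    Summable fun i => |w i| * |f i + g i| ^ p := by
  refine Summable.of_nonneg_of_le (fun i => by positivity) (fun i => ?_)
    ((hf.add hg).mul_left (2 ^ p))
  have h := aux_add_rpow p |f i| |g i| hp (abs_nonneg _) (abs_nonneg _)
  have h2 : |f i + g i| ^ p ≤ (|f i| + |g i|) ^ p :=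
    Real.rpow_le_rpow (abs_nonneg _) (abs_add_le _ _) (by linarith)
  calc |w i| * |f i + g i| ^ p ≤ |w i| * (2 ^ p * (|f i| ^ p + |g i| ^ p)) := by
        gcongr; exact h2.trans h
    _ = _ := by ring

lemma aux_summable_smul {ι : Type*} (w g : ι → ℝ) (p t : ℝ)
    (hg : Summable fun i => |w i| * |g i| ^ p) :
    Summable fun i => |w i| * |t * g i| ^ p := by
  refine (hg.mul_left (|t| ^ p)).congr (fun i => ?_)
  rw [abs_mul, Real.mul_rpow (abs_nonneg _) (abs_nonneg _)]; ring

lemma aux_summable_deriv {ι : Type*} (w f g : ι → ℝ) (p : ℝ) (hp : 1 < p)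
    (hf : Summable fun i => |w i| * |f i| ^ p) (hg : Summable fun i => |w i| * |g i| ^ p) :
    Summable fun i => w i * pPow p (f i) * g i := by
  refine Summable.of_norm_bounded ((hf.add hg).mul_left (2 ^ p)) (fun i => ?_)
  rw [Real.norm_eq_abs, mul_assoc, abs_mul]
  have h := aux_add_rpow p |f i| |g i| hp (abs_nonneg _) (abs_nonneg _)
  calc |w i| * |pPow p (f i) * g i| ≤ |w i| * (2 ^ p * (|f i| ^ p + |g i| ^ p)) := by
        gcongr; exact (aux_abs_pPow_mul p _ _ hp).trans h
    _ = _ := by ring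

lemma aux_deriv {ι : Type*} (w f g : ι → ℝ) (p : ℝ) (hp : 1 < p)
    (hf : Summable fun i => |w i| * |f i| ^ p) (hg : Summable fun i => |w i| * |g i| ^ p) :
    HasDerivAt (fun t : ℝ => ∑' i, w i * |f i + t * g i| ^ p)
      (p * ∑' i, w i * pPow p (f i) * g i) 0 := by
  have hu : Summable fun i => p * 2 ^ p * 
      (|w i| * (|f i| + |g i|) ^ p + |w i| * |g i| ^ p) := by
    refine Summable.mul_left _ (Summable.add ?_ hg)
    have := aux_summable w (fun i => |f i|) (fun i => |g i|) p hp (by simpa using hf)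
      (by simpa using hg)
    refine this.congr (fun i => ?_)
    rw [abs_of_nonneg (by positivity : 0 ≤ |f i| + |g i|)]
  have key := hasDerivAt_tsum_of_isPreconnected (𝕜 := ℝ) (F := ℝ)
    (g := fun i t => w i * |f i + t * g i| ^ p)
    (g' := fun i t => p * (w i * pPow p (f i + t * g i) * g i))
    (t := Metric.ball (0:ℝ) 1) (y₀ := 0) (y := 0) hu Metric.isOpen_ball
    (convex_ball (0:ℝ) 1).isPreconnected ?_ ?_ (by simp) ?_ (by simp)
  · simpa [tsum_mul_left] using key
  · intro i t _
    have h1 : HasDerivAt (fun t : ℝ => f i + t * g i) (g i) t := by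
      simpa using ((hasDerivAt_id t).mul_const (g i)).const_add (f i)
    have h2 := ((hasDerivAt_abs_rpow (f i + t * g i) hp).comp t h1).const_mul (w i)
    refine h2.congr_deriv ?_
    rw [mul_assoc p, aux_pPow p _ hp]; ring
  · intro i t ht
    have ht' : |t| ≤ 1 := by
      have := Metric.mem_ball.mp ht
      rw [Real.dist_eq, sub_zero] at this; exact this.le
    have h1 : |f i + t * g i| ≤ |f i| + |g i| := by
      refine (abs_add_le _ _).trans ?_
      rw [abs_mul]
      nlinarith [abs_nonneg (g i)]
    rw [Real.norm_eq_abs, mul_assoc (w i), abs_mul, abs_mul, abs_of_pos (by linarith : 0 < p)]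
    have h2 := aux_abs_pPow_mul p (f i + t * g i) (g i) hp
    have h3 := aux_add_rpow p (|f i| + |g i|) |g i| hp (by positivity) (abs_nonneg _)
    have h4 : (|f i + t * g i| + |g i|) ^ p ≤ (|f i| + |g i| + |g i|) ^ p :=
      Real.rpow_le_rpow (by positivity) (by linarith) (by linarith)
    calc p * (|w i| * |pPow p (f i + t * g i) * g i|)
        ≤ p * (|w i| * (2 ^ p * ((|f i| + |g i|) ^ p + |g i| ^ p))) := by
          gcongr; linarith
      _ = _ := by ring
  · refine Summable.of_norm ?_
    refine hf.congr (fun i => ?_)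
    rw [Real.norm_eq_abs, abs_mul]
    simp [abs_of_nonneg (Real.rpow_nonneg (abs_nonneg (f i)) p)]

lemma aux_pPow_neg (p a : ℝ) : pPow p (-a) = - pPow p a := by
  unfold pPow
  rw [abs_neg, Real.sign_neg]; ring

theorem stmt4 {X : Type*} [Countable X] [Infinite X]
    (m : X → ℝ) (b : X → X → ℝ) (c : X → ℝ) (p : ℝ)
    (hG : IsGraph m b) (hgconn : ConnectedIn b Set.univ) (hp : 1 < p)
    (V : Set X) (φ : X → ℝ) (hφ : MemD b c p φ) (ψ : X → ℝ) (hψ : MemCc V ψ) :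
    (∀ t : ℝ, MemD b c p (fun x => φ x + t * ψ x)) ∧
    HasDerivAt (fun t : ℝ => energy b c p (fun x => φ x + t * ψ x))
      (p * bracket m V (HOp m b c p φ) ψ) 0 := by
  obtain ⟨hm, hb0, hbs, hbd, hbsum⟩ := hG
  obtain ⟨hfin, hV⟩ := hψ
  obtain ⟨hφ1, hφ2⟩ := hφ
  have hp0 : p ≠ 0 := by linarith
  have habs : ∀ z : X × X, |b z.1 z.2| = b z.1 z.2 := fun z => abs_of_nonneg (hb0 _ _)
  -- summability
  have s1 : Summable fun z : X × X => b z.1 z.2 * |ψ z.1| ^ p := by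
    have h0 : (0 : X × X → ℝ) ≤ fun z : X × X => b z.1 z.2 * |ψ z.1| ^ p := fun z =>
      mul_nonneg (hb0 z.1 z.2) (Real.rpow_nonneg (abs_nonneg (ψ z.1)) p)
    refine (summable_prod_of_nonneg h0).mpr ⟨fun x => (hbsum x).mul_right (|ψ x| ^ p), ?_⟩
    refine summable_of_finite_support (hfin.subset ?_)
    intro x hx hx0
    apply hx
    simp [hx0, Real.zero_rpow hp0]
  have s2 : Summable fun z : X × X => b z.1 z.2 * |ψ z.2| ^ p := by
    have := (Equiv.prodComm X X).summable_iff.mpr s1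
    refine this.congr (fun z => ?_)
    simp [hbs z.1 z.2]
  have s1' : Summable fun z : X × X => |b z.1 z.2| * |ψ z.1| ^ p := by simpa only [habs] using s1
  have s2' : Summable fun z : X × X => |b z.1 z.2| * |ψ z.2| ^ p := by simpa only [habs] using s2
  have sφ : Summable fun z : X × X => |b z.1 z.2| * |φ z.1 - φ z.2| ^ p := by
    simpa only [habs] using hφ1
  have sψ : Summable fun z : X × X => |b z.1 z.2| * |ψ z.1 - ψ z.2| ^ p := by
    have := aux_summable (fun z : X × X => b z.1 z.2) (fun z => ψ z.1) (fun z => - ψ z.2) p hp s1'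
      (by simpa using s2')
    simpa only [← sub_eq_add_neg] using this
  have sc : Summable fun x => |c x| * |ψ x| ^ p := by
    refine summable_of_finite_support (hfin.subset ?_)
    intro x hx hx0
    apply hx
    simp [hx0, Real.zero_rpow hp0]
  have hdiff : ∀ (t : ℝ) (z : X × X), φ z.1 + t * ψ z.1 - (φ z.2 + t * ψ z.2)
      = (φ z.1 - φ z.2) + t * (ψ z.1 - ψ z.2) := fun t z => by ring
  refine ⟨fun t => ⟨?_, ?_⟩, ?_⟩
  · have := aux_summable (fun z : X × X => b z.1 z.2) _ _ p hp sφ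
      (aux_summable_smul (fun z : X × X => b z.1 z.2) _ p t sψ)
    simpa only [hdiff, habs] using this
  · exact aux_summable c _ _ p hp hφ2 (aux_summable_smul c _ p t sc)
  · have d1 := aux_deriv (fun z : X × X => b z.1 z.2) _ _ p hp sφ sψ
    have d2 := aux_deriv c _ _ p hp hφ2 sc
    have d := (d1.const_mul (1/2)).add d2
    have e1 := aux_summable_deriv (fun z : X × X => b z.1 z.2) _ _ p hp sφ s1'
    have e2 := aux_summable_deriv (fun z : X × X => b z.1 z.2) _ _ p hp sφ s2'
    have e3 := aux_summable_deriv c _ _ p hp hφ2 sc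
    have hswap : ∑' z : X × X, b z.1 z.2 * pPow p (φ z.1 - φ z.2) * ψ z.2
        = - ∑' z : X × X, b z.1 z.2 * pPow p (φ z.1 - φ z.2) * ψ z.1 := by
      rw [← tsum_neg, ← (Equiv.prodComm X X).tsum_eq]
      refine tsum_congr (fun z => ?_)
      simp only [Equiv.prodComm_apply, Prod.fst_swap, Prod.snd_swap]
      rw [hbs z.2 z.1, ← neg_sub (φ z.1) (φ z.2), aux_pPow_neg]; ring
    have hsplit : ∑' z : X × X, b z.1 z.2 * pPow p (φ z.1 - φ z.2) * (ψ z.1 - ψ z.2)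
        = 2 * ∑' z : X × X, b z.1 z.2 * pPow p (φ z.1 - φ z.2) * ψ z.1 := by
      simp only [mul_sub]
      rw [e1.tsum_sub e2, hswap]; ring
    have hfub : ∑' z : X × X, b z.1 z.2 * pPow p (φ z.1 - φ z.2) * ψ z.1
        = ∑' x, (∑' y, b x y * pPow p (φ x - φ y)) * ψ x := by
      rw [e1.tsum_prod]
      refine tsum_congr (fun x => ?_)
      rw [← tsum_mul_right]
    have e4 : Summable fun x => (∑' y, b x y * pPow p (φ x - φ y)) * ψ x := by
      refine summable_of_finite_support (hfin.subset ?_)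
      intro x hx hx0
      apply hx
      simp [hx0]
    have hbr : bracket m V (HOp m b c p φ) ψ
        = ∑' z : X × X, b z.1 z.2 * pPow p (φ z.1 - φ z.2) * ψ z.1
          + ∑' x, c x * pPow p (φ x) * ψ x := by
      rw [hfub, ← e4.tsum_add e3]
      unfold bracket
      refine tsum_congr (fun x => ?_)
      by_cases hx : x ∈ V
      · rw [Set.indicator_of_mem hx]
        have := (hm x).ne'
        unfold HOp
        field_simp
      · rw [Set.indicator_of_notMem hx, hV x hx]; simp
    rw [hbr]
    rw [hsplit] at d
    have hE : (fun t : ℝ => energy b c p (fun x => φ x + t * ψ x)) = fun t : ℝ =>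
        (1 / 2) * ∑' z : X × X, b z.1 z.2 * |(φ z.1 - φ z.2) + t * (ψ z.1 - ψ z.2)| ^ p
          + ∑' x, c x * |φ x + t * ψ x| ^ p := by
      funext t
      simp only [energy, hdiff]
    rw [hE]
    refine HasDerivAt.congr_deriv d ?_
    ring
end

section
/- Weak comparison principle for non-negative potentials: Let p ∈ (1,∞), let V ⊊ X, and assume c ≥ 0 on V. Let u, v ∈ F(V) satisfy Hu ≤ Hv on V and u ≤ v on ∂V, and assume the function (v−u) ∧ 0 attains a minimum on V (i.e., there is x₀ ∈ V with min(v(x₀)−u(x₀), 0) ≤ min(v(y)−u(y), 0) for all y ∈ V). Then u ≤ v on V. Moreover, on each connected component of V, either u = v or u < v. -/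
open scoped BigOperators

/-- `W` is a connected component of `V`: a maximal connected subset of `V`. -/
def IsComponentIn {X : Type*} (b : X → X → ℝ) (V W : Set X) : Prop :=
  W ⊆ V ∧ W.Nonempty ∧ ConnectedIn b W ∧
  ∀ W' : Set X, W ⊆ W' → W' ⊆ V → ConnectedIn b W' → W' = W
theorem pPow_strictMono {p : ℝ} (hp : 1 < p) : StrictMono (pPow p) := by
  have hq : 0 < p - 1 := by linarith
  intro a c hac
  unfold pPow
  rcases lt_trichotomy a 0 with ha | ha | ha
  · have h1 : 0 < |a| ^ (p - 1) := Real.rpow_pos_of_pos (abs_pos.2 ha.ne) _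
    rw [Real.sign_of_neg ha]
    rcases lt_trichotomy c 0 with hc | hc | hc
    · rw [Real.sign_of_neg hc, abs_of_neg ha, abs_of_neg hc]
      have := Real.rpow_lt_rpow (by linarith : 0 ≤ -c) (by linarith : -c < -a) hq
      linarith
    · subst hc; simp only [Real.sign_zero]; linarith
    · rw [Real.sign_of_pos hc]
      have : 0 < |c| ^ (p - 1) := Real.rpow_pos_of_pos (abs_pos.2 hc.ne') _
      linarith
  · subst ha
    rw [Real.sign_zero, Real.sign_of_pos hac]
    have : 0 < |c| ^ (p - 1) := Real.rpow_pos_of_pos (abs_pos.2 hac.ne') _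
    linarith
  · have hc : 0 < c := ha.trans hac
    rw [Real.sign_of_pos ha, Real.sign_of_pos hc, abs_of_pos ha, abs_of_pos hc]
    have := Real.rpow_lt_rpow ha.le hac hq
    linarith

theorem abs_pPow_sub_le {p : ℝ} (hp : 1 < p) (a c : ℝ) :
    |pPow p (a - c)| ≤ 2 ^ (p - 1) * (|a| ^ (p - 1) + |c| ^ (p - 1)) := by
  have hq : 0 < p - 1 := by linarith
  have h0 : |pPow p (a - c)| ≤ |a - c| ^ (p - 1) := by
    unfold pPow
    rw [abs_mul, abs_of_nonneg (Real.rpow_nonneg (abs_nonneg _) _)]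
    have hs : |Real.sign (a - c)| ≤ 1 := by
      rcases Real.sign_apply_eq (a - c) with h | h | h <;> rw [h] <;> norm_num
    exact mul_le_of_le_one_right (Real.rpow_nonneg (abs_nonneg _) _) hs
  have ha := Real.rpow_nonneg (abs_nonneg a) (p - 1)
  have hc := Real.rpow_nonneg (abs_nonneg c) (p - 1)
  have h2 : (0:ℝ) ≤ 2 ^ (p - 1) := Real.rpow_nonneg (by norm_num) _
  have h3 : |a - c| ≤ |a| + |c| := abs_sub a c
  refine h0.trans ?_
  rcases le_total |a| |c| with h | h
  · calc |a - c| ^ (p - 1) ≤ (2 * |c|) ^ (p - 1) :=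
          Real.rpow_le_rpow (abs_nonneg _) (by linarith) hq.le
      _ = 2 ^ (p - 1) * |c| ^ (p - 1) := Real.mul_rpow (by norm_num) (abs_nonneg _)
      _ ≤ _ := mul_le_mul_of_nonneg_left (by linarith) h2
  · calc |a - c| ^ (p - 1) ≤ (2 * |a|) ^ (p - 1) :=
          Real.rpow_le_rpow (abs_nonneg _) (by linarith) hq.le
      _ = 2 ^ (p - 1) * |a| ^ (p - 1) := Real.mul_rpow (by norm_num) (abs_nonneg _)
      _ ≤ _ := mul_le_mul_of_nonneg_left (by linarith) h2

theorem summable_HOp {X : Type*} {m : X → ℝ} {b : X → X → ℝ} {p : ℝ}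
    (hG : IsGraph m b) (hp : 1 < p) {V : Set X} {f : X → ℝ} (hf : MemF b p V f)
    {x : X} (hx : x ∈ V) : Summable fun y => b x y * pPow p (f x - f y) := by
  obtain ⟨-, hb, -, -, hs⟩ := hG
  have h : Summable fun y => 2 ^ (p - 1) * (b x y * |f x| ^ (p - 1) + b x y * |f y| ^ (p - 1)) :=
    (((hs x).mul_right _).add (hf x hx)).mul_left _
  refine Summable.of_norm_bounded h fun y => ?_
  rw [Real.norm_eq_abs, abs_mul, abs_of_nonneg (hb x y)]
  have := mul_le_mul_of_nonneg_left (abs_pPow_sub_le hp (f x) (f y)) (hb x y)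
  linarith

theorem key_step {X : Type*} {m : X → ℝ} {b : X → X → ℝ} {c : X → ℝ} {p : ℝ}
    (hG : IsGraph m b) (hp : 1 < p) {V : Set X} {u v : X → ℝ}
    (huF : MemF b p V u) (hvF : MemF b p V v) {x : X} (hx : x ∈ V) (hc : 0 ≤ c x)
    (hH : HOp m b c p u x ≤ HOp m b c p v x) (hle : v x - u x ≤ 0)
    (hn : ∀ y, 0 < b x y → v x - u x ≤ v y - u y) :
    ∀ y, 0 < b x y → v y - u y = v x - u x := by
  intro y hy
  have hmono := pPow_strictMono hp
  have su := summable_HOp hG hp huF hx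
  have sv := summable_HOp hG hp hvF hx
  obtain ⟨hm, hb, -, -, -⟩ := hG
  by_contra hne
  have hlt : v x - v y < u x - u y := by
    have := lt_of_le_of_ne (hn y hy) (Ne.symm hne)
    linarith
  have hsum : ∑' y, b x y * pPow p (v x - v y) < ∑' y, b x y * pPow p (u x - u y) := by
    refine Summable.tsum_lt_tsum (i := y) (fun z => ?_)
      (mul_lt_mul_of_pos_left (hmono hlt) hy) sv su
    rcases (hb x z).eq_or_lt with h | h
    · simp [← h]
    · exact mul_le_mul_of_nonneg_left (hmono.monotone (by linarith [hn z h])) h.le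
  have h1 := mul_lt_mul_of_pos_left hsum (one_div_pos.2 (hm x))
  have h2 := mul_le_mul_of_nonneg_left (hmono.monotone (by linarith : v x ≤ u x))
    (div_nonneg hc (hm x).le)
  unfold HOp at hH
  linarith

theorem stmt13 {X : Type*} [Countable X] [Infinite X]
    (m : X → ℝ) (b : X → X → ℝ) (c : X → ℝ) (p : ℝ)
    (hG : IsGraph m b) (hgconn : ConnectedIn b Set.univ) (hp : 1 < p)
    (V : Set X) (hV : V ≠ Set.univ) (hc : ∀ x ∈ V, 0 ≤ c x)
    (u v : X → ℝ) (huF : MemF b p V u) (hvF : MemF b p V v)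
    (hHuv : ∀ x ∈ V, HOp m b c p u x ≤ HOp m b c p v x)
    (hbd : ∀ x ∈ bdry b V, u x ≤ v x)
    (hmin : ∃ x₀ ∈ V, ∀ y ∈ V, min (v x₀ - u x₀) 0 ≤ min (v y - u y) 0) :
    (∀ x ∈ V, u x ≤ v x) ∧
    ∀ W : Set X, IsComponentIn b V W →
      (∀ x ∈ W, u x = v x) ∨ ∀ x ∈ W, u x < v x := by
  have hsymm := hG.2.2.1
  have hall : ∀ x ∈ V, u x ≤ v x := by
    obtain ⟨x₀, hx₀, hmin⟩ := hmin
    rcases le_or_gt 0 (v x₀ - u x₀) with h0 | h0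
    · intro x hx
      have := hmin x hx
      rw [min_eq_right h0] at this
      linarith [min_le_left (v x - u x) 0]
    · exfalso
      rw [min_eq_left h0.le] at hmin
      have hS : ∀ z, z ∈ V ∧ v z - u z = v x₀ - u x₀ := by
        intro z
        have hpath := hgconn x₀ (Set.mem_univ _) z (Set.mem_univ _)
        induction hpath with
        | refl => exact ⟨hx₀, rfl⟩
        | @tail y z _ hyz ih =>
          obtain ⟨hyV, hyd⟩ := ih
          have hkey := key_step hG hp huF hvF hyV (hc y hyV) (hHuv y hyV) (by linarith)
            (fun w hw => by
              by_cases hwV : w ∈ V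
              · linarith [hmin w hwV, min_le_left (v w - u w) 0]
              · linarith [hbd w ⟨hwV, y, hyV, hsymm y w ▸ hw⟩]) z hyz.2.2
          refine ⟨?_, by linarith⟩
          by_contra hzV
          linarith [hbd z ⟨hzV, y, hyV, hsymm y z ▸ hyz.2.2⟩]
      exact hV (Set.eq_univ_of_forall fun z => (hS z).1)
  refine ⟨hall, fun W hW => ?_⟩
  obtain ⟨hWV, -, hWc, -⟩ := hW
  by_cases hex : ∃ x ∈ W, u x = v x
  · left
    obtain ⟨x, hx, hxe⟩ := hex
    intro z hz
    have hpath := hWc x hx z hz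
    clear hz
    induction hpath with
    | refl => exact hxe
    | @tail y z _ hyz ih =>
      have hyV := hWV hyz.1
      have hkey := key_step hG hp huF hvF hyV (hc y hyV) (hHuv y hyV) (by linarith)
        (fun w hw => by
          by_cases hwV : w ∈ V
          · linarith [hall w hwV]
          · linarith [hbd w ⟨hwV, y, hyV, hsymm y w ▸ hw⟩]) z hyz.2.2
      linarith
  · right
    intro x hx
    exact lt_of_le_of_ne (hall x (hWV hx)) fun h => hex ⟨x, hx, h⟩
end
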